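/- Laplace asymptotics for the partition function: suppose V : R^n → R is twice continuously differentiable, attains its global minimum at a unique point q_* with K := V''(q_*) positive definite, M : R^n → positive definite symmetric matrices is continuous with det M bounded, and ∫ e^{−βV} sqrt(det M) dq < ∞ for all β > 0. Then Z(β) := (2πT)^{n/2} ∫ e^{−βV(q)} sqrt(det M(q)) dq satisfies Z(β) ~ (2πT)^n e^{−βV(q_*)} sqrt(det M(q_*)/det K) as T = 1/β → 0+. -/

import Mathlib

open scoped BigOperators
open Real Matrix MeasureTheory Filter

lemma laplace_factor {n : ℕ} {K : Matrix (Fin n) (Fin n) ℝ} (hK : K.PosDef) :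
    ∃ B : Matrix (Fin n) (Fin n) ℝ, B.det ≠ 0 ∧ B.det ^ 2 = K.det ∧
      ∀ x, x ⬝ᵥ K *ᵥ x = ∑ i, (B *ᵥ x) i ^ 2 := by
  obtain ⟨B, hB⟩ : ∃ B : Matrix (Fin n) (Fin n) ℝ, K = Bᵀ * B := by
    open scoped MatrixOrder in
    obtain ⟨B, hB⟩ := CStarAlgebra.nonneg_iff_eq_star_mul_self.mp hK.posSemidef.nonneg
    exact ⟨B, by simpa [star_eq_conjTranspose] using hB⟩
  have hd : B.det ^ 2 = K.det := by rw [hB, det_mul, det_transpose, sq]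
  refine ⟨B, ?_, hd, ?_⟩
  · intro h
    have := hK.det_pos
    rw [← hd, h] at this
    simp at this
  · intro x
    rw [hB, ← mulVec_mulVec, dotProduct_mulVec, vecMul_transpose]
    simp [dotProduct, sq]

lemma laplace_gauss {n : ℕ} {K : Matrix (Fin n) (Fin n) ℝ} (hK : K.PosDef) {a : ℝ} (ha : 0 < a) :
    Integrable (fun x : Fin n → ℝ => rexp (-(a * (x ⬝ᵥ K *ᵥ x)))) ∧
    ∫ x : Fin n → ℝ, rexp (-(a * (x ⬝ᵥ K *ᵥ x))) = √(π / a) ^ n / √K.det := by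
  obtain ⟨B, hB0, hBd, hB⟩ := laplace_factor hK
  set f : (Fin n → ℝ) → ℝ := fun y => ∏ i, rexp (-a * (y i) ^ 2) with hf
  have hfi : Integrable f := Integrable.fintype_prod (fun i => integrable_exp_neg_mul_sq ha)
  have hfv : ∫ y, f y = √(π / a) ^ n := by
    rw [hf, integral_fintype_prod_volume_eq_pow (fun t : ℝ => rexp (-a * t ^ 2)), integral_gaussian]
    simp
  have heq : (fun x : Fin n → ℝ => rexp (-(a * (x ⬝ᵥ K *ᵥ x)))) = fun x => f (toLin' B x) := by
    ext x
    simp only [hf, toLin'_apply, hB, ← Real.exp_sum]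
    congr 1
    rw [← Finset.mul_sum]; ring
  have hmap := Real.map_matrix_volume_pi_eq_smul_volume_pi hB0
  have hmeas : Measurable (toLin' B) := (LinearMap.continuous_on_pi _).measurable
  have hfi' : Integrable f (Measure.map (toLin' B) volume) := by
    rw [hmap]; exact hfi.smul_measure ENNReal.ofReal_ne_top
  rw [heq]
  refine ⟨hfi'.comp_measurable hmeas, ?_⟩
  rw [← integral_map hmeas.aemeasurable hfi'.1, hmap, integral_smul_measure, hfv, ← hBd,
    Real.sqrt_sq_eq_abs, ENNReal.toReal_ofReal (abs_nonneg _), abs_inv, smul_eq_mul]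
  ring

lemma laplace_lower {n : ℕ} {K : Matrix (Fin n) (Fin n) ℝ} (hK : K.PosDef) :
    ∃ c > 0, ∀ x : Fin n → ℝ, c * ‖x‖ ^ 2 ≤ x ⬝ᵥ K *ᵥ x := by
  obtain ⟨B, hB0, hBd, hB⟩ := laplace_factor hK
  set L := LinearMap.toContinuousLinearMap (toLin' B⁻¹) with hL
  have hLx : ∀ x, ‖x‖ ≤ (‖L‖ + 1) * ‖B *ᵥ x‖ := by
    intro x
    have h1 : L (B *ᵥ x) = x := by
      simp [hL, nonsing_inv_mul B (isUnit_iff_ne_zero.mpr hB0)]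
    calc ‖x‖ = ‖L (B *ᵥ x)‖ := by rw [h1]
      _ ≤ ‖L‖ * ‖B *ᵥ x‖ := L.le_opNorm _
      _ ≤ _ := by gcongr; linarith
  have hs : ∀ y : Fin n → ℝ, ‖y‖ ^ 2 ≤ ∑ i, y i ^ 2 := by
    intro y
    have : ‖y‖ ≤ √(∑ i, y i ^ 2) := by
      refine (pi_norm_le_iff_of_nonneg (Real.sqrt_nonneg _)).2 fun i => ?_
      apply Real.le_sqrt_of_sq_le
      rw [Real.norm_eq_abs, sq_abs]
      exact Finset.single_le_sum (f := fun i => y i ^ 2) (fun i _ => sq_nonneg _) (Finset.mem_univ i)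
    calc ‖y‖ ^ 2 ≤ √(∑ i, y i ^ 2) ^ 2 := by gcongr
      _ = _ := Real.sq_sqrt (Finset.sum_nonneg fun i _ => sq_nonneg _)
  have hp : 0 < ‖L‖ + 1 := by positivity
  refine ⟨((‖L‖ + 1) ^ 2)⁻¹, by positivity, fun x => ?_⟩
  rw [hB, inv_mul_le_iff₀ (by positivity)]
  calc ‖x‖ ^ 2 ≤ ((‖L‖ + 1) * ‖B *ᵥ x‖) ^ 2 := by gcongr; exact hLx x
    _ = (‖L‖ + 1) ^ 2 * ‖B *ᵥ x‖ ^ 2 := by ring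
    _ ≤ _ := by gcongr; exact hs _

lemma laplace_taylor {n : ℕ} {V : (Fin n → ℝ) → ℝ} (hV : ContDiff ℝ 2 V) {q : Fin n → ℝ}
    (hmin : ∀ x, x ≠ q → V q < V x) {K : Matrix (Fin n) (Fin n) ℝ}
    (hK : ∀ i j, K i j =
      fderiv ℝ (fun q => fderiv ℝ V q (Pi.single i 1)) q (Pi.single j 1)) :
    (fun x => V x - V q - 1 / 2 * ((x - q) ⬝ᵥ K *ᵥ (x - q))) =o[nhds q] fun x => ‖x - q‖ ^ 2 := by
  have hd : Differentiable ℝ V := hV.differentiable (by norm_num)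
  have hd' : Differentiable ℝ (fderiv ℝ V) :=
    (hV.fderiv_right (m := 1) (by norm_num)).differentiable (by norm_num)
  set L := fderiv ℝ (fderiv ℝ V) q with hL
  have hsymm : ∀ u v, L u v = L v u := fun u v =>
    (hV.contDiffAt (x := q)).isSymmSndFDerivAt (by simp) u v
  have hKL : ∀ i j, K i j = L (Pi.single j 1) (Pi.single i 1) := by
    intro i j
    rw [hK, fderiv_clm_apply (hd' q) (by fun_prop)]
    simp [hL]
  have hQ : ∀ x, x ⬝ᵥ K *ᵥ x = L x x := by
    intro x
    have hx : x = ∑ i, x i • (Pi.single i 1 : Fin n → ℝ) := by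
      ext j; simp [Finset.sum_apply, Pi.single_apply]
    conv_rhs => rw [hx]
    simp only [map_sum, map_smul, _root_.sum_apply, _root_.smul_apply, smul_eq_mul,
      dotProduct, mulVec, Finset.mul_sum, hKL]
    refine Finset.sum_congr rfl fun i _ => Finset.sum_congr rfl fun j _ => by ring
  have h0 : fderiv ℝ V q = 0 := by
    apply IsLocalMin.fderiv_eq_zero
    refine Eventually.of_forall fun x => ?_
    by_cases h : x = q
    · rw [h]
    · exact (hmin x h).le
  have hder : ∀ x ∈ (Set.univ : Set (Fin n → ℝ)),
      HasFDerivWithinAt (fun x => V x - V q - 1 / 2 * ((x - q) ⬝ᵥ K *ᵥ (x - q)))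
      (fderiv ℝ V x - L (x - q)) Set.univ x := by
    intro x _
    simp only [hQ]
    rw [hasFDerivWithinAt_univ]
    have h1 : HasFDerivAt (fun x : Fin n → ℝ => x - q) (ContinuousLinearMap.id ℝ _) x :=
      (hasFDerivAt_id x).sub_const q
    have h2 := ((L.hasFDerivAt.comp x h1).clm_apply h1).const_mul (1/2 : ℝ)
    convert! ((hd x).hasFDerivAt.sub_const (V q)).sub h2 using 1
    ext v
    simp only [one_div, ContinuousLinearMap.comp_id, Function.comp_apply, _root_.sub_apply,
      _root_.smul_apply, _root_.add_apply, ContinuousLinearMap.flip_apply, smul_eq_mul]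
    rw [hsymm v]
    ring
  have := convex_univ.isLittleO_pow_succ (n := 1) (Set.mem_univ q) hder ?_
  · simpa using this
  · have h3 := (hd' q).hasFDerivAt.isLittleO
    simpa [h0, nhdsWithin_univ] using h3.norm_right

lemma laplace_core {n : ℕ} {W g Q : (Fin n → ℝ) → ℝ} {C c : ℝ}
    (hW : Continuous W) (hg : Continuous g) (hg0 : ∀ x, 0 ≤ g x) (hgC : ∀ x, g x ≤ C)
    (hQs : ∀ (t : ℝ) x, Q (t • x) = t ^ 2 * Q x)
    (hc : 0 < c) (hQc : ∀ x, c * ‖x‖ ^ 2 ≤ Q x)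
    (hWQ : (fun x => W x - 1 / 2 * Q x) =o[nhds 0] fun x => ‖x‖ ^ 2)
    (hQi : ∀ a > 0, Integrable fun x => rexp (-(a * Q x)))
    (hint : ∀ β > (0 : ℝ), Integrable fun x => rexp (-(β * W x)) * g x)
    (hcoer : ∀ δ > 0, ∃ ε > 0, ∀ x, δ ≤ ‖x‖ → ε ≤ W x) :
    Tendsto (fun s : ℝ => s ^ n * ∫ x, rexp (-(s ^ 2 * W x)) * g x) atTop
      (nhds (g 0 * ∫ x, rexp (-(1 / 2 * Q x)))) := by
  obtain ⟨δ, hδ, hδW⟩ : ∃ δ > 0, ∀ x, ‖x‖ < δ → 1 / 4 * Q x ≤ W x := by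
    have := (Asymptotics.isLittleO_iff.1 hWQ) (show 0 < c / 4 by positivity)
    obtain ⟨δ, hδ, h⟩ := Metric.eventually_nhds_iff.1 this
    refine ⟨δ, hδ, fun x hx => ?_⟩
    have h1 := h (y := x) (by simpa using hx)
    rw [Real.norm_eq_abs, norm_pow, norm_norm] at h1
    have h2 := (abs_le.1 h1).1
    have h3 := hQc x
    linarith
  obtain ⟨ε, hε, hεW⟩ := hcoer δ hδ
  have hC : 0 ≤ C := (hg0 0).trans (hgC 0)
  set S := Metric.ball (0 : Fin n → ℝ) δ with hS
  have hSm : MeasurableSet S := measurableSet_ball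
  -- near part
  have hnear : Tendsto (fun s : ℝ => s ^ n * ∫ x in S, rexp (-(s ^ 2 * W x)) * g x) atTop
      (nhds (g 0 * ∫ x, rexp (-(1 / 2 * Q x)))) := by
    have hrew : ∀ᶠ s : ℝ in atTop, (∫ y, S.indicator (fun x => rexp (-(s ^ 2 * W x)) * g x) (s⁻¹ • y)) =
        s ^ n * ∫ x in S, rexp (-(s ^ 2 * W x)) * g x := by
      filter_upwards [eventually_gt_atTop 0] with s hs
      rw [Measure.integral_comp_inv_smul_of_nonneg volume _ hs.le, integral_indicator hSm]
      simp
    refine Tendsto.congr' hrew ?_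
    rw [← integral_const_mul]
    apply tendsto_integral_filter_of_dominated_convergence (fun y => C * rexp (-(1 / 4 * Q y)))
    · refine Eventually.of_forall fun s => ?_
      have : Measurable (S.indicator (fun x => rexp (-(s ^ 2 * W x)) * g x)) := by
        refine Measurable.indicator ?_ hSm
        exact Continuous.measurable (by fun_prop)
      exact (this.comp (measurable_const_smul _)).aestronglyMeasurable
    · filter_upwards [eventually_gt_atTop 0] with s hs
      refine Eventually.of_forall fun y => ?_
      by_cases hy : s⁻¹ • y ∈ S
      · rw [Set.indicator_of_mem hy, Real.norm_eq_abs, abs_of_nonneg (mul_nonneg (exp_pos _).le (hg0 _)),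
          mul_comm]
        have h1 := hδW (s⁻¹ • y) (by simpa [hS] using hy)
        rw [hQs] at h1
        have h2 : 1 / 4 * Q y ≤ s ^ 2 * W (s⁻¹ • y) := by
          calc 1 / 4 * Q y = s ^ 2 * (1 / 4 * (s⁻¹ ^ 2 * Q y)) := by field_simp
            _ ≤ _ := by gcongr
        gcongr
        exact hgC _
      · rw [Set.indicator_of_notMem hy, norm_zero]; positivity
    · exact (hQi _ (by norm_num)).const_mul C
    · refine Eventually.of_forall fun y => ?_
      have hy0 : Tendsto (fun s : ℝ => s⁻¹ • y) atTop (nhds 0) := by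
        simpa using (tendsto_inv_atTop_zero (𝕜 := ℝ)).smul_const y
      have hin : ∀ᶠ s : ℝ in atTop, s⁻¹ • y ∈ S := hy0 (Metric.ball_mem_nhds 0 hδ)
      have hsm : Tendsto (fun s : ℝ => s ^ 2 * (W (s⁻¹ • y) - 1 / 2 * Q (s⁻¹ • y))) atTop (nhds 0) := by
        have h1 := hWQ.comp_tendsto hy0
        have h2 : (fun s : ℝ => s ^ 2 * (W (s⁻¹ • y) - 1 / 2 * Q (s⁻¹ • y))) =o[atTop]
            fun s : ℝ => s ^ 2 * ‖s⁻¹ • y‖ ^ 2 := (Asymptotics.isBigO_refl _ _).mul_isLittleO h1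
        have h3 : (fun s : ℝ => s ^ 2 * ‖s⁻¹ • y‖ ^ 2) =ᶠ[atTop] fun s => ‖y‖ ^ 2 := by
          filter_upwards [eventually_gt_atTop 0] with s hs
          rw [norm_smul, norm_inv, Real.norm_eq_abs, abs_of_pos hs]
          field_simp
        have h4 := h2.trans_eventuallyEq h3
        exact (Asymptotics.isLittleO_one_iff ℝ).1
          (h4.trans_isBigO (Asymptotics.isBigO_const_const (‖y‖ ^ 2) one_ne_zero _))
      have hex : Tendsto (fun s : ℝ => s ^ 2 * W (s⁻¹ • y)) atTop (nhds (1 / 2 * Q y)) := by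
        have h5 := hsm.add_const (1 / 2 * Q y)
        rw [zero_add] at h5
        refine h5.congr' ?_
        filter_upwards [eventually_gt_atTop 0] with s hs
        rw [hQs]
        field_simp
        ring
      have hgg : Tendsto (fun s : ℝ => g (s⁻¹ • y)) atTop (nhds (g 0)) := (hg.tendsto 0).comp hy0
      have := ((Real.continuous_exp.tendsto _).comp hex.neg).mul hgg
      rw [mul_comm]
      refine this.congr' ?_
      filter_upwards [hin] with s hs
      rw [Set.indicator_of_mem hs]
      rfl
  have hfar : Tendsto (fun s : ℝ => s ^ n * ∫ x in Sᶜ, rexp (-(s ^ 2 * W x)) * g x) atTop (nhds 0) := by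
    set I := ∫ x in Sᶜ, rexp (-(1 * W x)) * g x with hI
    have hlim : Tendsto (fun s : ℝ => (s ^ (n : ℝ) * rexp (-ε * s)) * (rexp ε * I)) atTop (nhds 0) := by
      simpa using (tendsto_rpow_mul_exp_neg_mul_atTop_nhds_zero (n : ℝ) ε hε).mul_const (rexp ε * I)
    refine squeeze_zero' ?_ ?_ hlim
    · filter_upwards [eventually_gt_atTop 0] with s hs
      exact mul_nonneg (by positivity) (integral_nonneg fun x => mul_nonneg (exp_pos _).le (hg0 _))
    · filter_upwards [eventually_ge_atTop 1] with s hs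
      have hb : ∫ x in Sᶜ, rexp (-(s ^ 2 * W x)) * g x ≤
          ∫ x in Sᶜ, (rexp (-ε * s) * rexp ε) * (rexp (-(1 * W x)) * g x) := by
        refine setIntegral_mono_on (hint _ (by positivity)).integrableOn
          ((hint 1 one_pos).const_mul _).integrableOn hSm.compl fun x hx => ?_
        have hx' : ε ≤ W x := hεW x (by simpa [hS] using hx)
        rw [← mul_assoc, ← Real.exp_add, ← Real.exp_add]
        have : -(s ^ 2 * W x) ≤ -ε * s + ε + -(1 * W x) := by
          nlinarith [mul_nonneg (sub_nonneg.2 hs) (sub_nonneg.2 hx'), mul_nonneg (mul_nonneg (sub_nonneg.2 hs) (by linarith : 0 ≤ s)) (hε.le.trans hx')]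
        have := hg0 x
        gcongr
      rw [integral_const_mul] at hb
      rw [Real.rpow_natCast]
      calc _ ≤ s ^ n * (rexp (-ε * s) * rexp ε * I) := by gcongr
        _ = _ := by ring
  have := hnear.add hfar
  rw [add_zero] at this
  refine this.congr' ?_
  filter_upwards [eventually_gt_atTop 0] with s hs
  rw [← mul_add, integral_add_compl hSm (hint _ (by positivity))]

/-- Laplace asymptotics for the partition function:
`Z(β) = (2πT)^{n/2} ∫ e^{−βV} √(det M) dq` satisfies
`Z(β) ~ (2πT)^n e^{−βV(q_*)} √(det M(q_*)/det K)` as `T = 1/β → 0+`,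
i.e. the ratio of the two sides tends to `1` as `β → ∞`. -/
theorem laplace_partition_function (n : ℕ)
    (V : (Fin n → ℝ) → ℝ) (hV : ContDiff ℝ 2 V)
    (M : (Fin n → ℝ) → Matrix (Fin n) (Fin n) ℝ)
    (hMcont : ∀ i j, Continuous fun q => M q i j)
    (hMpos : ∀ q, (M q).PosDef)
    (hdetbdd : ∃ C : ℝ, ∀ q, (M q).det ≤ C)
    (qstar : Fin n → ℝ)
    (hmin : ∀ q, q ≠ qstar → V qstar < V q)
    (K : Matrix (Fin n) (Fin n) ℝ)
    (hK : ∀ i j, K i j =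
      fderiv ℝ (fun q => fderiv ℝ V q (Pi.single i 1)) qstar (Pi.single j 1))
    (hKpos : K.PosDef)
    (hint : ∀ β > (0 : ℝ),
      Integrable fun q => Real.exp (-(β * V q)) * Real.sqrt (M q).det)
    (hcoer : ∀ δ > (0 : ℝ), ∃ ε > (0 : ℝ),
      ∀ q, δ ≤ dist q qstar → V qstar + ε ≤ V q) :
    Tendsto
      (fun β : ℝ =>
        ((2 * π * (1 / β)) ^ ((n : ℝ) / 2) *
            ∫ q, Real.exp (-(β * V q)) * Real.sqrt (M q).det) /
          ((2 * π * (1 / β)) ^ (n : ℝ) * Real.exp (-(β * V qstar)) *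
            Real.sqrt ((M qstar).det / K.det)))
      atTop (nhds 1) := by
  obtain ⟨C, hC⟩ := hdetbdd
  obtain ⟨c, hc, hcK⟩ := laplace_lower hKpos
  have hMc : Continuous M := continuous_pi fun i => continuous_pi fun j => hMcont i j
  have hVc : Continuous V := hV.continuous
  have hshift : ∀ β : ℝ, (fun x => rexp (-(β * (V (qstar + x) - V qstar))) * √(M (qstar + x)).det)
      = fun x => rexp (β * V qstar) * (rexp (-(β * V (qstar + x))) * √(M (qstar + x)).det) := by
    intro β
    ext x
    rw [← mul_assoc, ← Real.exp_add]
    ring_nf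
  have hcore := laplace_core (n := n) (W := fun x => V (qstar + x) - V qstar)
    (g := fun x => √(M (qstar + x)).det) (Q := fun x => x ⬝ᵥ K *ᵥ x) (C := √C) (c := c)
    (by fun_prop)
    (Real.continuous_sqrt.comp (hMc.comp (continuous_const.add continuous_id)).matrix_det)
    (fun x => Real.sqrt_nonneg _)
    (fun x => Real.sqrt_le_sqrt (hC _))
    (fun t x => by simp [mulVec_smul]; ring) hc hcK
    (by
      have h := laplace_taylor hV hmin hK
      have ht : Tendsto (fun x => qstar + x) (nhds 0) (nhds qstar) := by
        have hcont : Continuous fun x => qstar + x := by fun_prop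
        have h0 := hcont.tendsto 0
        rwa [add_zero] at h0
      simpa [Function.comp_def] using h.comp_tendsto ht)
    (fun a ha => (laplace_gauss hKpos ha).1)
    (by
      intro β hβ
      simp only [hshift]
      exact ((hint β hβ).comp_add_left qstar).const_mul _)
    (by
      intro δ hδ
      obtain ⟨ε, hε, h⟩ := hcoer δ hδ
      refine ⟨ε, hε, fun x hx => ?_⟩
      have := h (qstar + x) (by simpa [dist_eq_norm] using hx)
      linarith)
  rw [(laplace_gauss hKpos (by norm_num : (0 : ℝ) < 1 / 2)).2] at hcore
  simp only [hshift, integral_const_mul, add_zero] at hcore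
  have hI : ∀ β : ℝ, ∫ x, rexp (-(β * V (qstar + x))) * √(M (qstar + x)).det =
      ∫ q, rexp (-(β * V q)) * √(M q).det := fun β =>
    integral_add_left_eq_self (fun q => rexp (-(β * V q)) * √(M q).det) qstar
  simp only [hI] at hcore
  have hm : 0 < √(M qstar).det := Real.sqrt_pos.2 (hMpos _).det_pos
  have hk : 0 < √K.det := Real.sqrt_pos.2 hKpos.det_pos
  have hp : 0 < √(π / (1 / 2)) := Real.sqrt_pos.2 (by positivity)
  have hlim := (hcore.comp Real.tendsto_sqrt_atTop).div_const
    (√(M qstar).det * (√(π / (1 / 2)) ^ n / √K.det))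
  rw [div_self (by positivity)] at hlim
  refine hlim.congr' ?_
  filter_upwards [eventually_gt_atTop 0] with β hβ
  have hsβ : 0 < √β := Real.sqrt_pos.2 hβ
  have hA : (2 * π * (1 / β)) ^ ((n : ℝ) / 2) = (√(π / (1 / 2)) / √β) ^ n := by
    rw [← Real.sqrt_div (by positivity), Real.sqrt_eq_rpow, ← Real.rpow_natCast,
      ← Real.rpow_mul (by positivity)]
    congr 1
    · field_simp
    · ring
  have hA2 : (2 * π * (1 / β)) ^ (n : ℝ) = ((√(π / (1 / 2)) / √β) ^ n) ^ 2 := by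
    rw [← hA, ← Real.rpow_natCast, ← Real.rpow_mul (by positivity)]
    congr 1
    push_cast; ring
  rw [hA, hA2, Real.sqrt_div (hMpos _).det_pos.le, Real.exp_neg]
  simp only [Function.comp_apply, Real.sq_sqrt hβ.le]
  generalize (∫ q, rexp (-(β * V q)) * √(M q).det) = J
  have := Real.exp_pos (β * V qstar)
  rw [div_pow]
  field_simp
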